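/- Let I be a top-k partial ranking of {1,…,n} with k < n. Then the average distances of I to itself are: d_{τ,avg}(I,I) = (1/2)·(n−k)(n−k−1)/2 for the Kendall tau distance, d_{H,avg}(I,I) = n−k−1 for the Hamming distance, and d_{S,avg}(I,I) = (n−k)(n−k−1) − (n−k−1)(2n−2k−1)/3 for the Spearman footrule distance. Equivalently, the kernel values are 𝒦^τ_{θ_1,θ_2}(I,I) = θ_2·exp(−(θ_1/2)·C(n−k,2)), 𝒦^H_{θ_1,θ_2}(I,I) = θ_2·exp(−θ_1(n−k−1)), and 𝒦^S_{θ_1,θ_2}(I,I) = θ_2·exp(−θ_1[(n−k)(n−k−1) − (n−k−1)(2n−2k−1)/3]), where 𝒦_{θ_1,θ_2}(R,R') = θ_2·exp(−θ_1·d_avg(R,R')). -/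

import Mathlib

/-!
Write `A` for the set of permutations compatible with `I` and `m = n - k`. All members of `A` agree
on the ranked items, and send the `m` unranked items to the `m` free ranks `≥ k`.

* Hamming and Spearman are sums over items `i` of a cost `g (σ i) (σ' i)` with `g v v = 0`, so only
  unranked items contribute. Left multiplication by a transposition of two free ranks preserves `A`
  (`card_fiber_eq`), hence the rank of an unranked item is uniform over the free ranks
  (`sum_topCompat_apply`), and the average distance is `(1 / m) ∑ g v w` over pairs of free ranks
  (`davgSets_of_coordwise`). The two sums are `m (m - 1)` and `m (m² - 1) / 3`.
* For Kendall's tau a discordant pair consists of unranked items (`mem_unranked_of_discordant`).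
  For such a pair, right multiplication of `σ'` by the transposition of its two items preserves `A`
  and exchanges concordance and discordance, so the pair is discordant for half of the `σ'`
  (`two_mul_card_discordant`); there are `m (m - 1) / 2` pairs.
-/

open Finset

/-- Kendall's tau distance on the symmetric group `S_n`. -/
def kendallTau {n : ℕ} (π σ : Equiv.Perm (Fin n)) : ℕ :=
  ((Finset.univ : Finset (Fin n × Fin n)).filter fun p =>
    p.1 < p.2 ∧ ((σ p.2 < σ p.1 ∧ π p.1 < π p.2) ∨ (σ p.1 < σ p.2 ∧ π p.2 < π p.1))).card

/-- Hamming distance on the symmetric group `S_n`. -/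
def permHammingDist {n : ℕ} (π σ : Equiv.Perm (Fin n)) : ℕ :=
  (Finset.univ.filter fun i : Fin n => π i ≠ σ i).card

/-- Spearman's footrule distance on the symmetric group `S_n`. -/
def spearmanFootrule {n : ℕ} (π σ : Equiv.Perm (Fin n)) : ℕ :=
  ∑ i : Fin n, ((π i : ℤ) - (σ i : ℤ)).natAbs

/-- The set `E_I` of permutations compatible with the top-`k` partial ranking
`I = (i_1, …, i_k)`: those `σ` with `σ(i_l) = l` for `l = 1, …, k`. -/
def topCompat {n k : ℕ} (hk : k ≤ n) (I : Fin k → Fin n) : Finset (Equiv.Perm (Fin n)) :=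
  Finset.univ.filter fun σ => ∀ l : Fin k, σ (I l) = Fin.castLE hk l

/-- Average distance between two finite sets of permutations. -/
noncomputable def davgSets {n : ℕ} (d : Equiv.Perm (Fin n) → Equiv.Perm (Fin n) → ℕ)
    (A B : Finset (Equiv.Perm (Fin n))) : ℝ :=
  (∑ σ ∈ A, ∑ σ' ∈ B, (d σ σ' : ℝ)) / (A.card * B.card)

/-- The 1-based position of `x` in the tuple `I` (and `0` if `x` does not occur in `I`). -/
def pos1 {n k : ℕ} (I : Fin k → Fin n) (x : Fin n) : ℕ :=
  ∑ l : Fin k, if I l = x then l.1 + 1 else 0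

/-- The set `{j_1, …, j_p}` of items ranked by both top-`k` partial rankings. -/
def interJ {n k : ℕ} (I I' : Fin k → Fin n) : Finset (Fin n) :=
  (Finset.univ.image I) ∩ (Finset.univ.image I')

/-- The set `Ĩ` of items ranked by `I` but not by `I'`. -/
def tildeSet {n k : ℕ} (I I' : Fin k → Fin n) : Finset (Fin n) :=
  (Finset.univ.image I) \ interJ I I'

section

/-! ### Unranked items and free ranks -/

/-- The items not ranked by `I`. -/
def unranked {n k : ℕ} (I : Fin k → Fin n) : Finset (Fin n) :=
  (Finset.univ.image I)ᶜ

/-- The ranks (counted from `0`) left free by a top-`k` ranking: those that are at least `k`. -/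
def freeRanks (n k : ℕ) : Finset (Fin n) :=
  Finset.univ.filter fun v => k ≤ v.1

variable {n k : ℕ} {hk : k ≤ n} {I : Fin k → Fin n}

theorem mem_topCompat {σ : Equiv.Perm (Fin n)} :
    σ ∈ topCompat hk I ↔ ∀ l : Fin k, σ (I l) = Fin.castLE hk l := by
  simp [topCompat]

theorem mem_unranked {i : Fin n} : i ∈ unranked I ↔ ∀ l, I l ≠ i := by
  simp [unranked]

theorem mem_freeRanks {v : Fin n} : v ∈ freeRanks n k ↔ k ≤ v.1 := by
  simp [freeRanks]

theorem apply_mem_freeRanks {σ : Equiv.Perm (Fin n)} (hσ : σ ∈ topCompat hk I) {i : Fin n}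
    (hi : i ∈ unranked I) : σ i ∈ freeRanks n k := by
  rw [mem_freeRanks]
  by_contra! h
  have h1 := mem_topCompat.1 hσ ⟨σ i, h⟩
  exact mem_unranked.1 hi _ (σ.injective (h1.trans (Fin.ext rfl)))

theorem card_unranked (hI : Function.Injective I) : (unranked I).card = n - k := by
  rw [unranked, card_compl, card_image_of_injective _ hI]
  simp

theorem sum_freeRanks (hk : k ≤ n) (f : ℕ → ℝ) :
    ∑ v ∈ freeRanks n k, f v = ∑ a ∈ range (n - k), f (k + a) := by
  rw [freeRanks, sum_filter, Fin.sum_univ_eq_sum_range (fun a => if k ≤ a then f a else 0) n,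
    ← sum_filter, sum_filter]
  obtain ⟨m, rfl⟩ := Nat.exists_eq_add_of_le hk
  rw [sum_range_add]
  rw [sum_eq_zero (s := range k)]
  · simp
  · intro x hx
    simp at hx
    simp [hx]

theorem card_freeRanks (hk : k ≤ n) : ((freeRanks n k).card : ℝ) = n - k := by
  have := sum_freeRanks hk (fun _ => 1)
  simp only [sum_const, nsmul_eq_mul, mul_one, card_range] at this
  rw [this, Nat.cast_sub hk]

theorem topCompat_nonempty (hI : Function.Injective I) : (topCompat hk I).Nonempty := by
  classical
  let e : Set.range I ≃ Set.range (Fin.castLE hk) :=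
    (Equiv.ofInjective I hI).symm.trans (Equiv.ofInjective _ (Fin.castLE_injective hk))
  refine ⟨e.extendSubtype, mem_topCompat.2 fun l => ?_⟩
  rw [Equiv.extendSubtype_apply_of_mem e (I l) ⟨l, rfl⟩]
  have : (⟨I l, ⟨l, rfl⟩⟩ : Set.range I) = Equiv.ofInjective I hI l := rfl
  simp only [e, Equiv.trans_apply]
  rw [this, Equiv.symm_apply_apply]
  rfl

/-! ### Uniformity of the rank of an unranked item -/

/-- Transposing two free ranks preserves the set of compatible permutations, so all free ranks are
taken equally often by a given item. -/
theorem card_fiber_eq {i v w : Fin n} (hv : v ∈ freeRanks n k) (hw : w ∈ freeRanks n k) :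
    ((topCompat hk I).filter fun σ => σ i = v).card =
      ((topCompat hk I).filter fun σ => σ i = w).card := by
  have key : ∀ σ ∈ topCompat hk I, Equiv.swap v w * σ ∈ topCompat hk I := by
    intro σ hσ
    rw [mem_topCompat] at hσ ⊢
    intro l
    rw [Equiv.Perm.mul_apply, hσ l]
    rw [mem_freeRanks] at hv hw
    apply Equiv.swap_apply_of_ne_of_ne <;>
    · intro h
      have := congrArg Fin.val h
      simp at this
      omega
  refine card_bij' (fun σ _ => Equiv.swap v w * σ) (fun σ _ => Equiv.swap v w * σ) ?_ ?_ ?_ ?_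
  · intro σ hσ
    rw [mem_filter] at hσ ⊢
    exact ⟨key σ hσ.1, by simp [hσ.2]⟩
  · intro σ hσ
    rw [mem_filter] at hσ ⊢
    exact ⟨key σ hσ.1, by simp [hσ.2]⟩
  · intro σ _
    simp
  · intro σ _
    simp

/-- The rank of an unranked item is uniformly distributed over the free ranks. -/
theorem sum_topCompat_apply {i : Fin n} (hi : i ∈ unranked I) (f : Fin n → ℝ) :
    ((n : ℝ) - k) * ∑ σ ∈ topCompat hk I, f (σ i) =
      (topCompat hk I).card * ∑ v ∈ freeRanks n k, f v := by
  have hfib : ∀ g : Fin n → ℝ, ∑ σ ∈ topCompat hk I, g (σ i) =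
      ∑ v ∈ freeRanks n k, (((topCompat hk I).filter fun σ => σ i = v).card : ℝ) * g v := by
    intro g
    rw [← sum_fiberwise_of_maps_to (g := fun σ : Equiv.Perm (Fin n) => σ i)
      (fun σ hσ => apply_mem_freeRanks hσ hi)]
    refine sum_congr rfl fun v _ => ?_
    rw [← nsmul_eq_mul, ← sum_const]
    exact sum_congr rfl fun σ hσ => by rw [(mem_filter.1 hσ).2]
  rcases (freeRanks n k).eq_empty_or_nonempty with h0 | ⟨v₀, hv₀⟩
  · rw [← card_freeRanks hk, h0]
    simp
  have hc : ∀ g : Fin n → ℝ, ∑ σ ∈ topCompat hk I, g (σ i) =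
      (((topCompat hk I).filter fun σ => σ i = v₀).card : ℝ) * ∑ v ∈ freeRanks n k, g v := by
    intro g
    rw [hfib, mul_sum]
    exact sum_congr rfl fun v hv => by rw [card_fiber_eq hv hv₀]
  have h1 := hc fun _ => 1
  simp only [sum_const, nsmul_eq_mul, mul_one, card_freeRanks hk] at h1
  rw [h1, hc]
  ring

/-- The ranks of one unranked item under two independent compatible permutations are independent
and uniform over the free ranks. -/
theorem sum_sum_topCompat_apply {i : Fin n} (hi : i ∈ unranked I) (g : Fin n → Fin n → ℝ) :
    ((n : ℝ) - k) ^ 2 * ∑ σ ∈ topCompat hk I, ∑ σ' ∈ topCompat hk I, g (σ i) (σ' i) =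
      ((topCompat hk I).card : ℝ) ^ 2 * ∑ v ∈ freeRanks n k, ∑ w ∈ freeRanks n k, g v w := by
  have h1 := sum_topCompat_apply (hk := hk) hi
    fun v => ((n : ℝ) - k) * ∑ σ' ∈ topCompat hk I, g v (σ' i)
  have h2 : ∀ v, _ := fun v => sum_topCompat_apply (hk := hk) hi (g v)
  rw [← mul_sum, sum_congr rfl fun v _ => h2 v, ← mul_sum] at h1
  linear_combination h1

/-- A distance that is a sum over items of a cost vanishing on the diagonal: only unranked items
contribute, each of them the average cost of two independent uniform free ranks. -/
theorem davgSets_of_coordwise (hk : k < n) (hI : Function.Injective I)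
    (d : Equiv.Perm (Fin n) → Equiv.Perm (Fin n) → ℕ) (g : Fin n → Fin n → ℝ)
    (hd : ∀ σ σ', (d σ σ' : ℝ) = ∑ i, g (σ i) (σ' i)) (hg : ∀ v, g v v = 0) :
    davgSets d (topCompat hk.le I) (topCompat hk.le I) =
      (∑ v ∈ freeRanks n k, ∑ w ∈ freeRanks n k, g v w) / ((n : ℝ) - k) := by
  have hA : ((topCompat hk.le I).card : ℝ) ≠ 0 := by
    exact_mod_cast (topCompat_nonempty hI).card_pos.ne'
  have hm : ((n : ℝ) - k) ≠ 0 := by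
    have : (k : ℝ) < n := by exact_mod_cast hk
    linarith
  have hsum : ∑ σ ∈ topCompat hk.le I, ∑ σ' ∈ topCompat hk.le I, (d σ σ' : ℝ) =
      ∑ i ∈ unranked I, ∑ σ ∈ topCompat hk.le I, ∑ σ' ∈ topCompat hk.le I, g (σ i) (σ' i) := by
    rw [sum_comm (s := unranked I)]
    refine sum_congr rfl fun σ hσ => ?_
    rw [sum_comm (s := unranked I)]
    refine sum_congr rfl fun σ' hσ' => ?_
    rw [hd]
    symm
    refine sum_subset (subset_univ _) fun i _ hi => ?_
    rw [mem_unranked] at hi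
    push Not at hi
    obtain ⟨l, rfl⟩ := hi
    rw [mem_topCompat.1 hσ, mem_topCompat.1 hσ', hg]
  have hterm : ∀ i ∈ unranked I,
      ∑ σ ∈ topCompat hk.le I, ∑ σ' ∈ topCompat hk.le I, g (σ i) (σ' i) =
      ((topCompat hk.le I).card : ℝ) ^ 2 *
        (∑ v ∈ freeRanks n k, ∑ w ∈ freeRanks n k, g v w) / ((n : ℝ) - k) ^ 2 := by
    intro i hi
    rw [eq_div_iff (pow_ne_zero 2 hm), ← sum_sum_topCompat_apply hi]
    ring
  rw [davgSets, hsum, sum_congr rfl hterm, sum_const, card_unranked hI, nsmul_eq_mul,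
    Nat.cast_sub hk.le]
  field_simp

theorem sum_range_abs_sub (m : ℕ) :
    ∑ a ∈ range m, ∑ b ∈ range m, |(a : ℝ) - b| = m * (m ^ 2 - 1) / 3 := by
  have h1 : ∀ m : ℕ, ∑ b ∈ range m, ((m : ℝ) - b) = m * (m + 1) / 2 := by
    intro m
    induction m with
    | zero => simp
    | succ m ih =>
      have : ∑ b ∈ range m, (((m + 1 : ℕ) : ℝ) - b) = ∑ b ∈ range m, (((m : ℝ) - b) + 1) :=
        sum_congr rfl fun b _ => by push_cast; ring
      rw [sum_range_succ, this, sum_add_distrib, ih]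
      simp
      ring
  have h2 : ∀ m : ℕ, ∑ b ∈ range m, |(m : ℝ) - b| = m * (m + 1) / 2 := by
    intro m
    rw [← h1]
    refine sum_congr rfl fun b hb => abs_of_nonneg ?_
    have : (b : ℝ) ≤ m := by exact_mod_cast (mem_range.1 hb).le
    linarith
  induction m with
  | zero => simp
  | succ m ih =>
    simp only [sum_range_succ, sum_add_distrib, ih, h2]
    simp only [abs_sub_comm _ (m : ℝ), h2]
    simp
    ring

/-! ### Discordant pairs -/

/-- The two items of `p` are ordered oppositely by `σ` and `σ'`. -/
def discordant (σ σ' : Equiv.Perm (Fin n)) (p : Fin n × Fin n) : Prop :=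
  (σ' p.2 < σ' p.1 ∧ σ p.1 < σ p.2) ∨ (σ' p.1 < σ' p.2 ∧ σ p.2 < σ p.1)

instance (σ σ' : Equiv.Perm (Fin n)) (p : Fin n × Fin n) : Decidable (discordant σ σ' p) := by
  unfold discordant
  infer_instance

/-- Pairs containing a ranked item are ordered alike by all compatible permutations. -/
theorem mem_unranked_of_discordant {σ σ' : Equiv.Perm (Fin n)} (hσ : σ ∈ topCompat hk I)
    (hσ' : σ' ∈ topCompat hk I) {p : Fin n × Fin n} (h : discordant σ σ' p) :
    p.1 ∈ unranked I ∧ p.2 ∈ unranked I := by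
  have hr : ∀ i, i ∉ unranked I → σ i = σ' i ∧ (σ i).1 < k := by
    intro i hi
    rw [mem_unranked] at hi
    push Not at hi
    obtain ⟨l, rfl⟩ := hi
    rw [mem_topCompat.1 hσ, mem_topCompat.1 hσ']
    exact ⟨rfl, l.2⟩
  have hu : ∀ i, i ∈ unranked I → k ≤ (σ i).1 ∧ k ≤ (σ' i).1 := fun i hi =>
    ⟨mem_freeRanks.1 (apply_mem_freeRanks hσ hi), mem_freeRanks.1 (apply_mem_freeRanks hσ' hi)⟩
  unfold discordant at h
  simp only [Fin.lt_def] at h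
  by_contra hcon
  have key : ∀ i, ((σ i).1 = (σ' i).1 ∧ (σ i).1 < k ∧ i ∉ unranked I) ∨
      (k ≤ (σ i).1 ∧ k ≤ (σ' i).1 ∧ i ∈ unranked I) := by
    intro i
    by_cases hi : i ∈ unranked I
    · exact Or.inr ⟨(hu i hi).1, (hu i hi).2, hi⟩
    · exact Or.inl ⟨congrArg Fin.val (hr i hi).1, (hr i hi).2, hi⟩
  rcases key p.1 with h1 | h1 <;> rcases key p.2 with h2 | h2
  · omega
  · omega
  · omega
  · exact hcon ⟨h1.2.2, h2.2.2⟩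

/-- Exchanging the ranks of two unranked items in `σ'` reverses whether they are discordant, so they
are discordant for exactly half of the compatible `σ'`. -/
theorem two_mul_card_discordant (σ : Equiv.Perm (Fin n)) {p : Fin n × Fin n} (hp : p.1 ≠ p.2)
    (h1 : p.1 ∈ unranked I) (h2 : p.2 ∈ unranked I) :
    2 * ((topCompat hk I).filter fun σ' => discordant σ σ' p).card = (topCompat hk I).card := by
  have key : ∀ σ' ∈ topCompat hk I, σ' * Equiv.swap p.1 p.2 ∈ topCompat hk I := by
    intro σ' hσ'
    rw [mem_topCompat] at hσ' ⊢
    intro l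
    rw [Equiv.Perm.mul_apply, Equiv.swap_apply_of_ne_of_ne (mem_unranked.1 h1 l)
      (mem_unranked.1 h2 l), hσ']
  have hflip : ∀ σ' : Equiv.Perm (Fin n),
      discordant σ (σ' * Equiv.swap p.1 p.2) p ↔ ¬ discordant σ σ' p := by
    intro σ'
    have a1 : σ p.1 ≠ σ p.2 := fun h => hp (σ.injective h)
    have a2 : σ' p.1 ≠ σ' p.2 := fun h => hp (σ'.injective h)
    simp only [discordant, Equiv.Perm.mul_apply, Equiv.swap_apply_left, Equiv.swap_apply_right]
    simp only [ne_eq, Fin.ext_iff] at a1 a2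
    simp only [Fin.lt_def]
    omega
  have hbij : ((topCompat hk I).filter fun σ' => discordant σ σ' p).card =
      ((topCompat hk I).filter fun σ' => ¬ discordant σ σ' p).card := by
    refine card_bij' (fun σ' _ => σ' * Equiv.swap p.1 p.2) (fun σ' _ => σ' * Equiv.swap p.1 p.2)
      ?_ ?_ ?_ ?_
    · intro σ' h
      rw [mem_filter] at h ⊢
      exact ⟨key _ h.1, by rw [hflip, not_not]; exact h.2⟩
    · intro σ' h
      rw [mem_filter] at h ⊢
      exact ⟨key _ h.1, by rw [hflip]; exact h.2⟩
    · intro σ' _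
      simp [mul_assoc]
    · intro σ' _
      simp [mul_assoc]
  rw [two_mul]
  nth_rw 2 [hbij]
  exact card_filter_add_card_filter_not _

theorem two_mul_card_lt_pairs (U : Finset (Fin n)) :
    2 * ((U ×ˢ U).filter fun p => p.1 < p.2).card = U.card * (U.card - 1) := by
  have hswap : ((U ×ˢ U).filter fun p => p.1 < p.2).card =
      ((U ×ˢ U).filter fun p => p.2 < p.1).card := by
    refine card_bij' (fun p _ => p.swap) (fun p _ => p.swap) ?_ ?_ ?_ ?_ <;>
      simp +contextual
  rw [Nat.mul_sub, mul_one, ← offDiag_card, two_mul]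
  nth_rw 2 [hswap]
  rw [← card_union_of_disjoint]
  · congr 1
    ext p
    simp only [mem_union, mem_filter, mem_product, mem_offDiag, ne_eq]
    have := @lt_or_lt_iff_ne _ _ p.1 p.2
    tauto
  · rw [disjoint_filter]
    intro p _ h
    exact h.asymm

/-! ### The three average distances -/

theorem davgSets_kendallTau (hk : k < n) (hI : Function.Injective I) :
    davgSets kendallTau (topCompat hk.le I) (topCompat hk.le I) =
      (1 / 2) * (((n : ℝ) - k) * ((n : ℝ) - k - 1) / 2) := by
  have hA : ((topCompat hk.le I).card : ℝ) ≠ 0 := by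
    exact_mod_cast (topCompat_nonempty hI).card_pos.ne'
  set P := (unranked I ×ˢ unranked I).filter fun p => p.1 < p.2 with hP
  have hPc : (P.card : ℝ) = ((n : ℝ) - k) * ((n : ℝ) - k - 1) / 2 := by
    have h := two_mul_card_lt_pairs (unranked I)
    rw [card_unranked hI] at h
    have h' := congrArg (Nat.cast (R := ℝ)) h
    rw [Nat.cast_mul, Nat.cast_mul, Nat.cast_sub (m := 1) (by omega), Nat.cast_sub hk.le] at h'
    push_cast at h'
    rw [← h']
    ring
  have hd : ∀ σ ∈ topCompat hk.le I, ∀ σ' ∈ topCompat hk.le I,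
      (kendallTau σ σ' : ℝ) = ∑ p ∈ P, if discordant σ σ' p then (1 : ℝ) else 0 := by
    intro σ hσ σ' hσ'
    rw [sum_boole, kendallTau]
    congr 2
    ext p
    simp only [hP, mem_filter, mem_univ, true_and, mem_product]
    constructor
    · intro h
      exact ⟨⟨mem_unranked_of_discordant hσ hσ' h.2, h.1⟩, h.2⟩
    · intro h
      exact ⟨h.1.2, h.2⟩
  have hrow : ∀ σ ∈ topCompat hk.le I, ∑ σ' ∈ topCompat hk.le I, (kendallTau σ σ' : ℝ) =
      P.card * ((topCompat hk.le I).card / 2) := by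
    intro σ hσ
    rw [sum_congr rfl (hd σ hσ), sum_comm, ← nsmul_eq_mul, ← sum_const]
    refine sum_congr rfl fun p hp => ?_
    simp only [hP, mem_filter, mem_product] at hp
    rw [sum_boole, ← two_mul_card_discordant (hk := hk.le) σ hp.2.ne hp.1.1 hp.1.2]
    push_cast
    ring
  rw [davgSets, sum_congr rfl hrow, sum_const, nsmul_eq_mul, hPc]
  field_simp

theorem davgSets_permHammingDist (hk : k < n) (hI : Function.Injective I) :
    davgSets permHammingDist (topCompat hk.le I) (topCompat hk.le I) = (n : ℝ) - k - 1 := by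
  have hm : ((n : ℝ) - k) ≠ 0 := by
    have : (k : ℝ) < n := by exact_mod_cast hk
    linarith
  rw [davgSets_of_coordwise hk hI permHammingDist (fun v w => if v ≠ w then 1 else 0)
    (fun σ σ' => by rw [permHammingDist, sum_boole]) (fun v => by simp)]
  have hrow : ∀ v ∈ freeRanks n k,
      ∑ w ∈ freeRanks n k, (if v ≠ w then (1 : ℝ) else 0) = (n : ℝ) - k - 1 := by
    intro v hv
    have : ∀ w, (if v ≠ w then (1 : ℝ) else 0) = 1 - if v = w then 1 else 0 := by
      intro w
      split_ifs <;> simp_all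
    simp only [this, sum_sub_distrib, sum_ite_eq, if_pos hv, sum_const, nsmul_eq_mul,
      card_freeRanks hk.le, mul_one]
  rw [sum_congr rfl hrow, sum_const, nsmul_eq_mul, card_freeRanks hk.le]
  field_simp

theorem davgSets_spearmanFootrule (hk : k < n) (hI : Function.Injective I) :
    davgSets spearmanFootrule (topCompat hk.le I) (topCompat hk.le I) =
      ((n : ℝ) - k) * ((n : ℝ) - k - 1)
        - ((n : ℝ) - k - 1) * (2 * (n : ℝ) - 2 * k - 1) / 3 := by
  have hm : ((n : ℝ) - k) ≠ 0 := by
    have : (k : ℝ) < n := by exact_mod_cast hk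
    linarith
  rw [davgSets_of_coordwise hk hI spearmanFootrule (fun v w => |((v : ℕ) : ℝ) - (w : ℕ)|)
    (fun σ σ' => by
      rw [spearmanFootrule, Nat.cast_sum]
      refine sum_congr rfl fun i _ => ?_
      rw [Nat.cast_natAbs]
      push_cast
      rfl) (fun v => by simp)]
  have hsum : ∑ v ∈ freeRanks n k, ∑ w ∈ freeRanks n k, |((v : ℕ) : ℝ) - (w : ℕ)| =
      ∑ a ∈ range (n - k), ∑ b ∈ range (n - k), |(a : ℝ) - b| := by
    rw [sum_freeRanks hk.le (fun a => ∑ w ∈ freeRanks n k, |(a : ℝ) - (w : ℕ)|)]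
    refine sum_congr rfl fun a _ => ?_
    rw [sum_freeRanks hk.le (fun b => |((k + a : ℕ) : ℝ) - b|)]
    refine sum_congr rfl fun b _ => ?_
    push_cast
    rw [add_sub_add_left_eq_sub]
  rw [hsum, sum_range_abs_sub, Nat.cast_sub hk.le]
  field_simp
  ring

end

/-- Corollary: average self-distances of a top-`k` partial ranking and the corresponding
kernel values `𝒦_{θ₁,θ₂}(I,I) = θ₂ exp(−θ₁ d_avg(I,I))`. -/
theorem davg_topk_self (n k : ℕ) (hk : k < n) (I : Fin k → Fin n)
    (hI : Function.Injective I) :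
    (davgSets kendallTau (topCompat hk.le I) (topCompat hk.le I) =
        (1 / 2) * (((n : ℝ) - k) * ((n : ℝ) - k - 1) / 2) ∧
      davgSets permHammingDist (topCompat hk.le I) (topCompat hk.le I) =
        (n : ℝ) - k - 1 ∧
      davgSets spearmanFootrule (topCompat hk.le I) (topCompat hk.le I) =
        ((n : ℝ) - k) * ((n : ℝ) - k - 1)
          - ((n : ℝ) - k - 1) * (2 * (n : ℝ) - 2 * k - 1) / 3) ∧
    ∀ θ₁ θ₂ : ℝ, 0 < θ₁ → 0 < θ₂ →
      (θ₂ * Real.exp (-θ₁ * davgSets kendallTau (topCompat hk.le I) (topCompat hk.le I)) =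
          θ₂ * Real.exp (-(θ₁ / 2) * ((n - k).choose 2 : ℝ)) ∧
        θ₂ * Real.exp
            (-θ₁ * davgSets permHammingDist (topCompat hk.le I) (topCompat hk.le I)) =
          θ₂ * Real.exp (-θ₁ * ((n : ℝ) - k - 1)) ∧
        θ₂ * Real.exp
            (-θ₁ * davgSets spearmanFootrule (topCompat hk.le I) (topCompat hk.le I)) =
          θ₂ * Real.exp (-θ₁ * (((n : ℝ) - k) * ((n : ℝ) - k - 1)
            - ((n : ℝ) - k - 1) * (2 * (n : ℝ) - 2 * k - 1) / 3))) := by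
  have h1 := davgSets_kendallTau hk hI
  have h2 := davgSets_permHammingDist hk hI
  have h3 := davgSets_spearmanFootrule hk hI
  refine ⟨⟨h1, h2, h3⟩, fun θ₁ θ₂ _ _ => ⟨?_, by rw [h2], by rw [h3]⟩⟩
  rw [h1, Nat.cast_choose_two, Nat.cast_sub hk.le]
  ring_nf
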